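/- arXiv:2312.15431 — 3 statements merged into one kernel-verified Lean document; each statement's English description precedes it below -/
import Mathlib

section
/- Suppose the discrete-time LTI system x(k+1)=Ax(k)+Bu(k), y(k)=Cx(k)+Du(k) is controllable (the controllability matrix [B, AB, ..., A^{n-1}B] has rank n), (u_d, y_d) is a length-T trajectory of the system, and u_d is persistently exciting of order L+n. If additionally L is not smaller than the lag of the system, then the stacked matrix col(H_L(u_d), H_L(y_d)) ∈ ℝ^{(m+p)L × (T-L+1)} has rank mL + n. -/
/-!
The proof factors through the states. Let `X = [x(0), …, x(T - L)]`.

*Input/state matrix.* Controllability and excitation of order `L + n` force `col(H_L(u), X)` to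
have full row rank `mL + n`. Let the rows `η` (against `H_L(u)`) and `ξ` (against `X`) form a left
annihilator. Unrolling the dynamics `k ≤ n` times turns it, by a shift, into a left annihilator of
`col(H_{L+k}(u), X)` with input part `(ξA^{k-1}B, …, ξB, η_0, …, η_{L-1})` and state part `ξA^k`
(`shifted_annihilator`). All the input parts are windows of one sequence `h`, see `extSeq`.
Combining them with the coefficients of the characteristic polynomial of `A` removes the state part
by Cayley–Hamilton, so excitation of order `L + n` says that `h` satisfies a linear recurrence whose
leading coefficient is `1`. As `h` vanishes far to the right, it vanishes identically
(`recurrence_zero`). Hence `η = 0` and `ξA^jB = 0` for `j < n`, and controllability gives `ξ = 0`.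

*Replacing states by outputs.* A linear combination of windows of the trajectory is again a
trajectory. If its input vanishes, then its output at time `i` is `C A^i` times its initial state,
so by observability in `L` steps the output vanishes iff the initial state does. Hence
`col(H_L(u), X)` and `col(H_L(u), H_L(y))` have the same kernel, and so the same rank.
-/

open Matrix

noncomputable section

/-- Hankel matrix of depth `L` of a length-`T` signal with values in `ℝ^qd`. -/
def Hankel {T L qd : ℕ} (hLT : L ≤ T) (ω : Fin T → Fin qd → ℝ) :
    Matrix (Fin L × Fin qd) (Fin (T - L + 1)) ℝ :=
  Matrix.of fun ia j =>
    ω ⟨ia.1.1 + j.1, by have h1 := ia.1.isLt; have h2 := j.isLt; omega⟩ ia.2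

/-- `(u, y)` is a length-`T` input/output trajectory of the LTI system `(A, B, C, D)`. -/
def IsTrajectory {n m p T : ℕ}
    (A : Matrix (Fin n) (Fin n) ℝ) (B : Matrix (Fin n) (Fin m) ℝ)
    (C : Matrix (Fin p) (Fin n) ℝ) (D : Matrix (Fin p) (Fin m) ℝ)
    (u : Fin T → Fin m → ℝ) (y : Fin T → Fin p → ℝ) : Prop :=
  ∃ x : Fin (T + 1) → Fin n → ℝ,
    ∀ k : Fin T,
      x k.succ = A.mulVec (x k.castSucc) + B.mulVec (u k) ∧
      y k = C.mulVec (x k.castSucc) + D.mulVec (u k)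

/-- Controllability matrix `[B, AB, ..., A^{n-1}B]`. -/
def ctrbMat {n m : ℕ} (A : Matrix (Fin n) (Fin n) ℝ) (B : Matrix (Fin n) (Fin m) ℝ) :
    Matrix (Fin n) (Fin n × Fin m) ℝ :=
  Matrix.of fun i kj => (A ^ (kj.1 : ℕ) * B) i kj.2

/-- Depth-`ℓ` observability matrix `col(C, CA, ..., CA^{ℓ-1})`. -/
def obsMat {n p : ℕ} (A : Matrix (Fin n) (Fin n) ℝ) (C : Matrix (Fin p) (Fin n) ℝ) (ℓ : ℕ) :
    Matrix (Fin ℓ × Fin p) (Fin n) ℝ :=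
  Matrix.of fun ki j => (C * A ^ (ki.1 : ℕ)) ki.2 j

theorem eq_zero_of_rank_eq_card {ι κ : Type*} [Fintype ι] [Fintype κ] [DecidableEq κ]
    (M : Matrix ι κ ℝ) (h : M.rank = Fintype.card κ) (v : κ → ℝ) (hv : M *ᵥ v = 0) : v = 0 := by
  have h1 := LinearMap.finrank_range_add_finrank_ker M.mulVecLin
  rw [Module.finrank_fintype_fun_eq_card] at h1
  have h2 : Module.finrank ℝ (LinearMap.range M.mulVecLin) = Fintype.card κ := h
  have h3 : LinearMap.ker M.mulVecLin = ⊥ := Submodule.finrank_eq_zero.mp (by omega)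
  have h4 : v ∈ LinearMap.ker M.mulVecLin := by simpa using hv
  rw [h3] at h4
  simpa using h4

theorem rank_eq_of_ker_iff {ι ι' κ : Type*} [Fintype ι] [Fintype ι'] [Fintype κ]
    [DecidableEq κ]
    (M : Matrix ι κ ℝ) (N : Matrix ι' κ ℝ) (h : ∀ v, M *ᵥ v = 0 ↔ N *ᵥ v = 0) :
    M.rank = N.rank := by
  have h1 := LinearMap.finrank_range_add_finrank_ker M.mulVecLin
  have h2 := LinearMap.finrank_range_add_finrank_ker N.mulVecLin
  have h3 : LinearMap.ker M.mulVecLin = LinearMap.ker N.mulVecLin := by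
    ext v; simpa using h v
  rw [h3] at h1
  unfold Matrix.rank
  omega

/-- The sequence `ξA^{n-1}B, …, ξAB, ξB, η_0, η_1, …`, whose windows of length `L + k` starting at
position `n - k` are the input parts of the annihilators obtained from `(η, ξ)` by unrolling the
dynamics `k` times. -/
def extSeq {n m : ℕ} (A : Matrix (Fin n) (Fin n) ℝ) (B : Matrix (Fin n) (Fin m) ℝ)
    (ξ : Fin n → ℝ) (η : ℕ → Fin m → ℝ) (r : ℕ) : Fin m → ℝ :=
  if r < n then (ξ ᵥ* A ^ (n - 1 - r)) ᵥ* B else η (r - n)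

theorem shifted_annihilator {n m T L : ℕ}
    (A : Matrix (Fin n) (Fin n) ℝ) (B : Matrix (Fin n) (Fin m) ℝ)
    (U : ℕ → Fin m → ℝ) (X : ℕ → Fin n → ℝ)
    (hX : ∀ k < T, X (k + 1) = A *ᵥ X k + B *ᵥ U k)
    (ξ : Fin n → ℝ) (η : ℕ → Fin m → ℝ)
    (hker : ∀ j, j + L ≤ T → ∑ i ∈ Finset.range L, η i ⬝ᵥ U (i + j) + ξ ⬝ᵥ X j = 0)
    (k : ℕ) (hk : k ≤ n) (j : ℕ) (hj : j + k + L ≤ T) :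
    ∑ s ∈ Finset.range (L + k), extSeq A B ξ η (s + (n - k)) ⬝ᵥ U (s + j)
      + (ξ ᵥ* A ^ k) ⬝ᵥ X j = 0 := by
  induction k generalizing j with
  | zero => simpa [extSeq] using hker j (by omega)
  | succ k ih =>
    have h := ih (by omega) (j + 1) (by omega)
    rw [hX j (by omega), dotProduct_add, dotProduct_mulVec, dotProduct_mulVec, vecMul_vecMul,
      ← pow_succ] at h
    rw [← add_assoc L k 1, Finset.sum_range_succ', ← h]
    have h0 : extSeq A B ξ η (0 + (n - (k + 1))) = (ξ ᵥ* A ^ k) ᵥ* B := by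
      rw [extSeq, if_pos (by omega)]
      congr 3
      omega
    rw [h0]
    have hs : ∀ s, extSeq A B ξ η (s + 1 + (n - (k + 1))) ⬝ᵥ U (s + 1 + j)
        = extSeq A B ξ η (s + (n - k)) ⬝ᵥ U (s + (j + 1)) := by
      intro s
      rw [show s + 1 + (n - (k + 1)) = s + (n - k) by omega,
        show s + 1 + j = s + (j + 1) by omega]
    simp only [hs, zero_add]
    ring

/-- A sequence that vanishes from `N + n` on and satisfies a monic recurrence of order `n`,
read from right to left, vanishes identically. -/
theorem recurrence_zero {m n N : ℕ} (α : ℕ → ℝ) (hα : α n = 1) (h : ℕ → Fin m → ℝ)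
    (hbig : ∀ r, N + n ≤ r → h r = 0)
    (hrec : ∀ s < N + n, ∑ k ∈ Finset.range (n + 1), α k • h (s + (n - k)) = 0) (r : ℕ) :
    h r = 0 := by
  by_cases hr : N + n ≤ r
  · exact hbig r hr
  · have h1 := hrec r (by omega)
    rw [Finset.sum_range_succ, Finset.sum_eq_zero, hα] at h1
    · simpa using h1
    · intro k hk
      have := Finset.mem_range.mp hk
      rw [recurrence_zero α hα h hbig hrec (r + (n - k)), smul_zero]
termination_by N + n - r
decreasing_by omega

/-- Full row rank of `col(H_L(u), X)`, stated as triviality of its left kernel; `hpe` is persistent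
excitation of order `L + n`. -/
theorem input_state_annihilator_zero {n m T L : ℕ}
    (A : Matrix (Fin n) (Fin n) ℝ) (B : Matrix (Fin n) (Fin m) ℝ)
    (hctrb : (ctrbMat A B).rank = n)
    (U : ℕ → Fin m → ℝ) (X : ℕ → Fin n → ℝ)
    (hX : ∀ k < T, X (k + 1) = A *ᵥ X k + B *ᵥ U k)
    (hpe : ∀ f : ℕ → Fin m → ℝ,
      (∀ j, j + (L + n) ≤ T → ∑ s ∈ Finset.range (L + n), f s ⬝ᵥ U (s + j) = 0) →
      ∀ s < L + n, f s = 0)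
    (ξ : Fin n → ℝ) (η : ℕ → Fin m → ℝ) (hη : ∀ i, L ≤ i → η i = 0)
    (hker : ∀ j, j + L ≤ T → ∑ i ∈ Finset.range L, η i ⬝ᵥ U (i + j) + ξ ⬝ᵥ X j = 0) :
    ξ = 0 ∧ ∀ i, η i = 0 := by
  set h := extSeq A B ξ η with hh
  have hbig : ∀ r, L + n ≤ r → h r = 0 := by
    intro r hr
    rw [hh, extSeq, if_neg (by omega), hη _ (by omega)]
  have hdeg : A.charpoly.natDegree = n := by simp [Matrix.charpoly_natDegree_eq_dim]
  have hα : A.charpoly.coeff n = 1 := by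
    have := A.charpoly_monic.coeff_natDegree
    rwa [hdeg] at this
  have hCH : ∑ k ∈ Finset.range (n + 1), A.charpoly.coeff k • A ^ k = 0 := by
    have := A.aeval_self_charpoly
    rwa [Polynomial.aeval_eq_sum_range, hdeg] at this
  have hzero : ∀ r, h r = 0 := by
    refine recurrence_zero (N := L) (fun k => A.charpoly.coeff k) hα h hbig ?_
    refine hpe (fun s => ∑ k ∈ Finset.range (n + 1), A.charpoly.coeff k • h (s + (n - k))) ?_
    intro j hj
    have h1 : ∀ k ∈ Finset.range (n + 1), A.charpoly.coeff k *
        (∑ s ∈ Finset.range (L + n), h (s + (n - k)) ⬝ᵥ U (s + j)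
          + (ξ ᵥ* A ^ k) ⬝ᵥ X j) = 0 := by
      intro k hk
      have hk := Finset.mem_range.mp hk
      -- The window of length `L + n` only adds zero entries to the one of length `L + k`.
      have h2 : ∑ s ∈ Finset.range (L + k), h (s + (n - k)) ⬝ᵥ U (s + j)
          = ∑ s ∈ Finset.range (L + n), h (s + (n - k)) ⬝ᵥ U (s + j) := by
        apply Finset.sum_subset
        · intro s hs
          simp only [Finset.mem_range] at hs ⊢
          omega
        · intro s _ hs
          simp only [Finset.mem_range] at hs
          rw [hbig _ (by omega), zero_dotProduct]
      rw [← h2, shifted_annihilator A B U X hX ξ η hker k (by omega) j (by omega), mul_zero]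
    have h3 := Finset.sum_eq_zero h1
    simp only [mul_add, Finset.sum_add_distrib] at h3
    have h4 : ∑ k ∈ Finset.range (n + 1), A.charpoly.coeff k * ((ξ ᵥ* A ^ k) ⬝ᵥ X j) = 0 := by
      have := congrArg (fun M : Matrix (Fin n) (Fin n) ℝ => ξ ⬝ᵥ (M *ᵥ X j)) hCH
      simpa [Matrix.sum_mulVec, dotProduct_sum, smul_mulVec, dotProduct_mulVec] using this
    rw [h4, add_zero] at h3
    rw [← h3]
    simp only [sum_dotProduct, smul_dotProduct, smul_eq_mul, Finset.mul_sum]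
    exact Finset.sum_comm
  constructor
  · apply eq_zero_of_rank_eq_card (ctrbMat A B)ᵀ (by simpa [Matrix.rank_transpose] using hctrb)
    ext ⟨k, b⟩
    have h1 := congrFun (hzero (n - 1 - k)) b
    rw [hh, extSeq, if_pos (by omega), show n - 1 - (n - 1 - k.1) = k.1 by omega,
      vecMul_vecMul] at h1
    rw [mulVec_transpose]
    exact h1
  · intro i
    have h1 := hzero (i + n)
    rwa [hh, extSeq, if_neg (by omega), Nat.add_sub_cancel] at h1

theorem free_response {n m p L : ℕ}
    (A : Matrix (Fin n) (Fin n) ℝ) (B : Matrix (Fin n) (Fin m) ℝ)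
    (C : Matrix (Fin p) (Fin n) ℝ) (D : Matrix (Fin p) (Fin m) ℝ)
    (U : ℕ → Fin m → ℝ) (X : ℕ → Fin n → ℝ) (Y : ℕ → Fin p → ℝ)
    (hX : ∀ k < L, X (k + 1) = A *ᵥ X k + B *ᵥ U k)
    (hY : ∀ k < L, Y k = C *ᵥ X k + D *ᵥ U k)
    (hU : ∀ k < L, U k = 0) (i : ℕ) (hi : i < L) : Y i = (C * A ^ i) *ᵥ X 0 := by
  have h1 : ∀ i < L, X i = A ^ i *ᵥ X 0 := by
    intro i
    induction i with
    | zero => simp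
    | succ i ih =>
      intro hi
      rw [hX i (by omega), ih (by omega), hU i (by omega), mulVec_zero, add_zero, mulVec_mulVec,
        ← pow_succ']
  rw [hY i hi, hU i hi, h1 i hi, mulVec_zero, add_zero, mulVec_mulVec]

/-- Rank of the stacked Hankel matrix `col(H_L(u_d), H_L(y_d))` is `mL + n` when the system
is controllable, `u_d` is persistently exciting of order `L + n`, and `L` is not smaller than
the lag of the system (i.e. some `ℓ ≤ L` makes the observability matrix have rank `n`). -/
theorem stacked_hankel_rank
    {n m p T L : ℕ} (hL : 0 < L) (hLnT : L + n ≤ T)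
    (A : Matrix (Fin n) (Fin n) ℝ) (B : Matrix (Fin n) (Fin m) ℝ)
    (C : Matrix (Fin p) (Fin n) ℝ) (D : Matrix (Fin p) (Fin m) ℝ)
    (hctrb : (ctrbMat A B).rank = n)
    (ud : Fin T → Fin m → ℝ) (yd : Fin T → Fin p → ℝ)
    (htraj : IsTrajectory A B C D ud yd)
    (hpe : (Hankel hLnT ud).rank = m * (L + n))
    (hlag : ∃ ℓ ≤ L, (obsMat A C ℓ).rank = n) :
    (Matrix.fromRows (Hankel (by omega : L ≤ T) ud)
        (Hankel (by omega : L ≤ T) yd)).rank = m * L + n := by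
  obtain ⟨x, hx⟩ := htraj
  -- Signals on all of `ℕ`, continued by zero.
  let U : ℕ → Fin m → ℝ := fun k => if h : k < T then ud ⟨k, h⟩ else 0
  let Y : ℕ → Fin p → ℝ := fun k => if h : k < T then yd ⟨k, h⟩ else 0
  let X : ℕ → Fin n → ℝ := fun k => if h : k < T + 1 then x ⟨k, h⟩ else 0
  have hU : ∀ k (h : k < T), ud ⟨k, h⟩ = U k := fun k h => by simp [U, h]
  have hYd : ∀ k (h : k < T), yd ⟨k, h⟩ = Y k := fun k h => by simp [Y, h]
  have hX : ∀ k < T, X (k + 1) = A *ᵥ X k + B *ᵥ U k := by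
    intro k hk
    have := (hx ⟨k, hk⟩).1
    simpa [X, U, hk, hk.le] using this
  have hY : ∀ k < T, Y k = C *ᵥ X k + D *ᵥ U k := by
    intro k hk
    have := (hx ⟨k, hk⟩).2
    simpa [X, U, Y, hk, hk.le] using this
  have hpe' : ∀ f : ℕ → Fin m → ℝ,
      (∀ j, j + (L + n) ≤ T → ∑ s ∈ Finset.range (L + n), f s ⬝ᵥ U (s + j) = 0) →
      ∀ s < L + n, f s = 0 := by
    intro f hf s hs
    have h0 := eq_zero_of_rank_eq_card (Hankel hLnT ud)ᵀ
      (by rw [Matrix.rank_transpose, hpe]; simp [mul_comm]) (fun ia => f ia.1 ia.2) (by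
        ext j
        have := hf j (by omega)
        rw [Finset.sum_range] at this
        rw [mulVec_transpose, vecMul, dotProduct, Fintype.sum_prod_type]
        simpa only [Hankel, Matrix.of_apply, hU, dotProduct, Pi.zero_apply] using this)
    ext a
    exact congrFun h0 (⟨s, hs⟩, a)
  let M : Matrix (Fin L × Fin m ⊕ Fin n) (Fin (T - L + 1)) ℝ :=
    Matrix.fromRows (Hankel (by omega : L ≤ T) ud) (Matrix.of fun i j => X j i)
  have hM : M.rank = m * L + n := by
    have hli : LinearIndependent ℝ M.row := by
      rw [← Matrix.vecMul_injective_iff, ← Matrix.coe_vecMulLinear,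
        injective_iff_map_eq_zero M.vecMulLinear]
      intro w hw
      obtain ⟨hξ, hη⟩ := input_state_annihilator_zero A B hctrb U X hX hpe'
        (fun i => w (Sum.inr i))
        (fun i a => if h : i < L then w (Sum.inl (⟨i, h⟩, a)) else 0)
        (fun i hi => by ext a; simp [Nat.not_lt.mpr hi]) (by
          intro j hj
          have h1 : (w ᵥ* M) ⟨j, by omega⟩ = 0 := congrFun hw _
          rw [vecMul, dotProduct, Fintype.sum_sum_type, Fintype.sum_prod_type] at h1
          rw [Finset.sum_range]
          simpa [M, Hankel, hU, dotProduct] using h1)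
      ext (⟨i, a⟩ | i)
      · simpa using congrFun (hη i) a
      · exact congrFun hξ i
    rw [hli.rank_matrix]
    simp [mul_comm]
  rw [← hM]
  apply rank_eq_of_ker_iff
  intro v
  -- The combination with weights `v` of the windows of the trajectory.
  let U' : ℕ → Fin m → ℝ := fun i => ∑ j : Fin (T - L + 1), v j • U (i + j)
  let X' : ℕ → Fin n → ℝ := fun i => ∑ j : Fin (T - L + 1), v j • X (i + j)
  let Y' : ℕ → Fin p → ℝ := fun i => ∑ j : Fin (T - L + 1), v j • Y (i + j)
  have hX' : ∀ k < L, X' (k + 1) = A *ᵥ X' k + B *ᵥ U' k := by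
    intro k hk
    simp only [X', U', Matrix.mulVec_sum, ← Finset.sum_add_distrib, mulVec_smul, ← smul_add]
    refine Finset.sum_congr rfl fun j _ => ?_
    rw [← hX (k + j) (by omega), add_right_comm]
  have hY' : ∀ k < L, Y' k = C *ᵥ X' k + D *ᵥ U' k := by
    intro k hk
    simp only [X', U', Y', Matrix.mulVec_sum, ← Finset.sum_add_distrib, mulVec_smul, ← smul_add]
    refine Finset.sum_congr rfl fun j _ => ?_
    rw [← hY (k + j) (by omega)]
  have hHu : Hankel (by omega : L ≤ T) ud *ᵥ v = 0 ↔ ∀ k < L, U' k = 0 := by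
    constructor
    · intro h k hk
      ext a
      have := congrFun h (⟨k, hk⟩, a)
      simpa [Hankel, mulVec, dotProduct, hU, U', mul_comm] using this
    · rintro h
      ext ⟨k, a⟩
      have := congrFun (h k k.2) a
      simpa [Hankel, mulVec, dotProduct, hU, U', mul_comm] using this
  have hHy : Hankel (by omega : L ≤ T) yd *ᵥ v = 0 ↔ ∀ k < L, Y' k = 0 := by
    constructor
    · intro h k hk
      ext a
      have := congrFun h (⟨k, hk⟩, a)
      simpa [Hankel, mulVec, dotProduct, hYd, Y', mul_comm] using this
    · rintro h
      ext ⟨k, a⟩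
      have := congrFun (h k k.2) a
      simpa [Hankel, mulVec, dotProduct, hYd, Y', mul_comm] using this
  have hXv : (Matrix.of fun i (j : Fin (T - L + 1)) => X j i) *ᵥ v = X' 0 := by
    ext a
    simp [mulVec, dotProduct, X', mul_comm]
  have hsplit : ∀ {α β : Type} (f : α → ℝ) (g : β → ℝ), Sum.elim f g = 0 ↔ f = 0 ∧ g = 0 := by
    intro α β f g
    rw [← Sum.elim_zero_zero, Sum.elim_eq_iff]
  rw [fromRows_mulVec, fromRows_mulVec, hsplit, hsplit, hHu, hHy, hXv]
  refine and_congr_right fun hU0 => ?_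
  have hfree := free_response A B C D U' X' Y' hX' hY' hU0
  constructor
  · intro h
    obtain ⟨ℓ, hℓ, hrank⟩ := hlag
    apply eq_zero_of_rank_eq_card (obsMat A C ℓ) (by simpa using hrank)
    ext ⟨i, b⟩
    have hi : i.1 < L := by omega
    have := (hfree i hi).symm.trans (h i hi)
    exact congrFun this b
  · intro h k hk
    rw [hfree k hk, h, mulVec_zero]
end
end

section
/- Proposition 1 (sufficient conditions for regularized equivalence): Suppose H = WΣVᵀ is a compact SVD (W ∈ ℝ^{q×r} with WᵀW = I_r, V ∈ ℝ^{s×r} with VᵀV = I_r, Σ ∈ ℝ^{r×r} invertible) and set H̄ := WΣ. Let G ∈ ℝ^{m_g×s} and Ḡ ∈ ℝ^{m_ḡ×r} satisfy: (a) rowspace(H GᵀG) ⊆ rowspace(H), and (b) Vᵀ GᵀG V = Ḡᵀ Ḡ. Then for every λ₂ > 0 and λ_y > 0: (u*, y*, σ*) is part of a minimizer of the problem minimizing f(u,y,σ) + λ₂‖G g‖₂² over (g,u,y,σ) ∈ ℝ^s × 𝒰 × 𝒴 × ℝ^{pT_ini} subject to H g = v(u,y,σ), if and only if it is part of a minimizer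 of the problem minimizing f(u,y,σ) + λ₂‖Ḡ ḡ‖₂² over (ḡ,u,y,σ) ∈ ℝ^r × 𝒰 × 𝒴 × ℝ^{pT_ini} subject to H̄ ḡ = v(u,y,σ); moreover, the optimal (u, y, σ) is unique whenever it exists. -/
/-! The regularizers of the two problems agree after the change of variables `gbar ↔ V gbar`, and
the component of `g` orthogonal to the row space of `H` can only increase the cost.  Write
`g = V Vᵀ g + h` with `Vᵀ h = 0`, so `H h = 0`.  The hypothesis `hrow` says that `GᵀG` maps the row space of
`H` (the range of `V`) into itself, so the cross term `⟨G V Vᵀ g, G h⟩` vanishes and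
`‖G g‖² ≥ ‖G V Vᵀ g‖² = ‖Gbar Vᵀ g‖²` by
`hGbar` (`reg_reduced_le`).  Hence `g ↦ Vᵀ g` and
`gbar ↦ V gbar` carry feasible points to feasible points with the same `(u, y, σ)` without
increasing the objective.

For uniqueness, the midpoint of two minimizers is feasible by convexity.  By the parallelogram
identity (`quad_midpoint`) its objective is the common minimum value less a quarter of the quadratic
objective of the difference, which is positive definite in `(u, y, σ)`. -/

open Matrix

noncomputable section

/-- `w(u, σ) = col(u_ini, y_ini + σ, u)`. -/
def wvec {mTini pTini mN : ℕ} (uini : Fin mTini → ℝ) (yini σ : Fin pTini → ℝ)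
    (u : Fin mN → ℝ) : Fin (mTini + pTini + mN) → ℝ :=
  Fin.append (Fin.append uini (yini + σ)) u

/-- `v(u, y, σ) = col(u_ini, y_ini + σ, u, y)`. -/
def vvec {mTini pTini mN pN : ℕ} (uini : Fin mTini → ℝ) (yini σ : Fin pTini → ℝ)
    (u : Fin mN → ℝ) (y : Fin pN → ℝ) : Fin (mTini + pTini + mN + pN) → ℝ :=
  Fin.append (wvec uini yini σ u) y

/-- The cost `f(u, y, σ) = uᵀRu + yᵀQy + λ_y ‖σ‖₂²`. -/
def cost {mN pN pTini : ℕ} (R : Matrix (Fin mN) (Fin mN) ℝ) (Q : Matrix (Fin pN) (Fin pN) ℝ)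
    (lamy : ℝ) (u : Fin mN → ℝ) (y : Fin pN → ℝ) (σ : Fin pTini → ℝ) : ℝ :=
  u ⬝ᵥ R.mulVec u + y ⬝ᵥ Q.mulVec y + lamy * (σ ⬝ᵥ σ)

/-- The row space of a matrix: the range of `x ↦ Aᵀ x`. -/
def rowSpace {a b : ℕ} (A : Matrix (Fin a) (Fin b) ℝ) : Submodule ℝ (Fin b → ℝ) :=
  LinearMap.range Aᵀ.mulVecLin

/-- Parallelogram identity; no symmetry of `A` is needed. -/
lemma quad_midpoint {n : ℕ} (A : Matrix (Fin n) (Fin n) ℝ) (x y : Fin n → ℝ) :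
    ((1 / 2 : ℝ) • x + (1 / 2 : ℝ) • y) ⬝ᵥ A *ᵥ ((1 / 2 : ℝ) • x + (1 / 2 : ℝ) • y) =
      (x ⬝ᵥ A *ᵥ x + y ⬝ᵥ A *ᵥ y) / 2 - (x - y) ⬝ᵥ A *ᵥ (x - y) / 4 := by
  simp only [mulVec_add, mulVec_sub, mulVec_smul, add_dotProduct, dotProduct_add, sub_dotProduct,
    dotProduct_sub, smul_dotProduct, dotProduct_smul, smul_eq_mul]
  ring

lemma sq_midpoint {n : ℕ} (x y : Fin n → ℝ) :
    ((1 / 2 : ℝ) • x + (1 / 2 : ℝ) • y) ⬝ᵥ ((1 / 2 : ℝ) • x + (1 / 2 : ℝ) • y) =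
      (x ⬝ᵥ x + y ⬝ᵥ y) / 2 - (x - y) ⬝ᵥ (x - y) / 4 := by
  simpa using quad_midpoint 1 x y

lemma append_midpoint {a b : ℕ} (x x' : Fin a → ℝ) (y y' : Fin b → ℝ) :
    Fin.append ((1 / 2 : ℝ) • x + (1 / 2 : ℝ) • x') ((1 / 2 : ℝ) • y + (1 / 2 : ℝ) • y') =
      (1 / 2 : ℝ) • Fin.append x y + (1 / 2 : ℝ) • Fin.append x' y' := by
  funext i
  refine Fin.addCases (fun i => ?_) (fun i => ?_) i <;> simp

/-- `vvec` is affine in `(u, y, σ)`. -/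
lemma vvec_midpoint {a b c d : ℕ} (uini : Fin a → ℝ) (yini σ σ' : Fin b → ℝ)
    (u u' : Fin c → ℝ) (y y' : Fin d → ℝ) :
    vvec uini yini ((1 / 2 : ℝ) • σ + (1 / 2 : ℝ) • σ') ((1 / 2 : ℝ) • u + (1 / 2 : ℝ) • u')
        ((1 / 2 : ℝ) • y + (1 / 2 : ℝ) • y') =
      (1 / 2 : ℝ) • vvec uini yini σ u y + (1 / 2 : ℝ) • vvec uini yini σ' u' y' := by
  have h1 : uini = (1 / 2 : ℝ) • uini + (1 / 2 : ℝ) • uini := by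
    funext i; simp; ring
  have h2 : yini + ((1 / 2 : ℝ) • σ + (1 / 2 : ℝ) • σ') =
      (1 / 2 : ℝ) • (yini + σ) + (1 / 2 : ℝ) • (yini + σ') := by
    funext i; simp; ring
  unfold vvec wvec
  rw [h2]
  conv_lhs => rw [h1]
  simp only [append_midpoint]

lemma quad_pos {n : ℕ} {A : Matrix (Fin n) (Fin n) ℝ} (hA : A.PosDef) {x : Fin n → ℝ}
    (hx : x ≠ 0) : 0 < x ⬝ᵥ A *ᵥ x := by
  simpa using hA.dotProduct_mulVec_pos hx

lemma quad_nonneg {n : ℕ} {A : Matrix (Fin n) (Fin n) ℝ} (hA : A.PosDef) (x : Fin n → ℝ) :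
    0 ≤ x ⬝ᵥ A *ᵥ x := by
  simpa using hA.posSemidef.dotProduct_mulVec_nonneg x

lemma sq_nonneg_dot {n : ℕ} (x : Fin n → ℝ) : 0 ≤ x ⬝ᵥ x :=
  Finset.sum_nonneg fun i _ => mul_self_nonneg (x i)

lemma cost_midpoint {a b c : ℕ} (R : Matrix (Fin a) (Fin a) ℝ) (Q : Matrix (Fin b) (Fin b) ℝ)
    (lamy : ℝ) (u u' : Fin a → ℝ) (y y' : Fin b → ℝ) (σ σ' : Fin c → ℝ) :
    cost R Q lamy ((1 / 2 : ℝ) • u + (1 / 2 : ℝ) • u') ((1 / 2 : ℝ) • y + (1 / 2 : ℝ) • y')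
        ((1 / 2 : ℝ) • σ + (1 / 2 : ℝ) • σ') =
      (cost R Q lamy u y σ + cost R Q lamy u' y' σ') / 2
        - cost R Q lamy (u - u') (y - y') (σ - σ') / 4 := by
  unfold cost
  rw [quad_midpoint, quad_midpoint, sq_midpoint]
  ring

lemma eq_zero_of_cost_nonpos {a b c : ℕ} {R : Matrix (Fin a) (Fin a) ℝ}
    {Q : Matrix (Fin b) (Fin b) ℝ} {lamy : ℝ} (hR : R.PosDef) (hQ : Q.PosDef) (hlamy : 0 < lamy)
    {u : Fin a → ℝ} {y : Fin b → ℝ} {σ : Fin c → ℝ} (h : cost R Q lamy u y σ ≤ 0) :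
    u = 0 ∧ y = 0 ∧ σ = 0 := by
  unfold cost at h
  have h1 := quad_nonneg hR u
  have h2 := quad_nonneg hQ y
  have h3 := mul_nonneg hlamy.le (sq_nonneg_dot σ)
  refine ⟨?_, ?_, ?_⟩
  · by_contra hu
    linarith [quad_pos hR hu]
  · by_contra hy
    linarith [quad_pos hQ hy]
  · have h4 : lamy * (σ ⬝ᵥ σ) = 0 := by linarith
    exact dotProduct_self_eq_zero.1 ((mul_eq_zero.1 h4).resolve_left hlamy.ne')

/-- The Gram identity for `Gbar` says that `gbar ↦ V gbar` preserves the regularizer. -/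
lemma reg_lift {s r a b : ℕ} {V : Matrix (Fin s) (Fin r) ℝ} {G : Matrix (Fin a) (Fin s) ℝ}
    {Gbar : Matrix (Fin b) (Fin r) ℝ} (hGbar : Vᵀ * Gᵀ * G * V = Gbarᵀ * Gbar)
    (x : Fin r → ℝ) :
    (G *ᵥ (V *ᵥ x)) ⬝ᵥ (G *ᵥ (V *ᵥ x)) = (Gbar *ᵥ x) ⬝ᵥ (Gbar *ᵥ x) := by
  have key : ∀ {k : ℕ} (B : Matrix (Fin k) (Fin r) ℝ),
      (B *ᵥ x) ⬝ᵥ (B *ᵥ x) = x ⬝ᵥ ((Bᵀ * B) *ᵥ x) := by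
    intro k B
    rw [← mulVec_mulVec, dotProduct_mulVec x, vecMul_transpose]
  rw [mulVec_mulVec, key, key, ← hGbar, transpose_mul]
  simp only [Matrix.mul_assoc]

/-- Every vector in the range of `V` is in the row space of `H = W Σ Vᵀ`. -/
lemma exists_transpose_mulVec_eq {q s r : ℕ} {H : Matrix (Fin q) (Fin s) ℝ}
    {W : Matrix (Fin q) (Fin r) ℝ} {Sg : Matrix (Fin r) (Fin r) ℝ} {V : Matrix (Fin s) (Fin r) ℝ}
    (hW : Wᵀ * W = 1) (hSg : IsUnit Sg) (hSVD : H = W * Sg * Vᵀ) (x : Fin r → ℝ) :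
    ∃ z, Hᵀ *ᵥ z = V *ᵥ x := by
  obtain ⟨T, hT⟩ := hSg.exists_left_inv
  have hT' : Sgᵀ * Tᵀ = 1 := by rw [← transpose_mul, hT, transpose_one]
  have e : Hᵀ * (W * Tᵀ) = V := by
    calc Hᵀ * (W * Tᵀ) = V * (Sgᵀ * ((Wᵀ * W) * Tᵀ)) := by
          rw [hSVD]; simp only [transpose_mul, transpose_transpose, Matrix.mul_assoc]
      _ = V := by rw [hW, Matrix.one_mul, hT', Matrix.mul_one]
  exact ⟨(W * Tᵀ) *ᵥ x, by rw [mulVec_mulVec, e]⟩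

/-- Projecting `g` onto the row space of `H` does not increase the regularizer: the cross term
vanishes by the row space condition. -/
lemma reg_reduced_le {q s r a b : ℕ} {H : Matrix (Fin q) (Fin s) ℝ}
    {W : Matrix (Fin q) (Fin r) ℝ} {Sg : Matrix (Fin r) (Fin r) ℝ} {V : Matrix (Fin s) (Fin r) ℝ}
    (hW : Wᵀ * W = 1) (hV : Vᵀ * V = 1) (hSg : IsUnit Sg) (hSVD : H = W * Sg * Vᵀ)
    {G : Matrix (Fin a) (Fin s) ℝ} {Gbar : Matrix (Fin b) (Fin r) ℝ}
    (hrow : rowSpace (H * Gᵀ * G) ≤ rowSpace H)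
    (hGbar : Vᵀ * Gᵀ * G * V = Gbarᵀ * Gbar) (g : Fin s → ℝ) :
    (Gbar *ᵥ (Vᵀ *ᵥ g)) ⬝ᵥ (Gbar *ᵥ (Vᵀ *ᵥ g)) ≤ (G *ᵥ g) ⬝ᵥ (G *ᵥ g) := by
  rw [← reg_lift hGbar]
  obtain ⟨h, hh⟩ : ∃ h, h = g - V *ᵥ (Vᵀ *ᵥ g) := ⟨_, rfl⟩
  have hHh : H *ᵥ h = 0 := by
    have : Vᵀ *ᵥ h = 0 := by
      rw [hh, mulVec_sub, mulVec_mulVec (Vᵀ *ᵥ g), hV, one_mulVec, sub_self]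
    rw [hSVD, ← mulVec_mulVec, this, mulVec_zero]
  have hcross : (G *ᵥ h) ⬝ᵥ (G *ᵥ (V *ᵥ (Vᵀ *ᵥ g))) = 0 := by
    obtain ⟨z, hz⟩ := exists_transpose_mulVec_eq hW hSg hSVD (Vᵀ *ᵥ g)
    obtain ⟨w, hw⟩ : (H * Gᵀ * G)ᵀ *ᵥ z ∈ rowSpace H :=
      hrow (LinearMap.mem_range.2 ⟨z, rfl⟩)
    have hw' : Hᵀ *ᵥ w = Gᵀ *ᵥ (G *ᵥ (Hᵀ *ᵥ z)) := by
      rw [mulVecLin_apply] at hw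
      rw [hw, mulVec_mulVec, mulVec_mulVec]
      simp only [transpose_mul, transpose_transpose, Matrix.mul_assoc]
    calc (G *ᵥ h) ⬝ᵥ (G *ᵥ (V *ᵥ (Vᵀ *ᵥ g))) = h ⬝ᵥ (Gᵀ *ᵥ (G *ᵥ (Hᵀ *ᵥ z))) := by
          rw [hz, dotProduct_mulVec h, vecMul_transpose]
      _ = (H *ᵥ h) ⬝ᵥ w := by rw [← hw', dotProduct_mulVec h, vecMul_transpose]
      _ = 0 := by rw [hHh, zero_dotProduct]
  have hg : G *ᵥ g = G *ᵥ h + G *ᵥ (V *ᵥ (Vᵀ *ᵥ g)) := by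
    rw [← mulVec_add, hh, sub_add_cancel]
  rw [hg, add_dotProduct, dotProduct_add, dotProduct_add, hcross,
    dotProduct_comm (G *ᵥ (V *ᵥ (Vᵀ *ᵥ g))) (G *ᵥ h), hcross]
  linarith [sq_nonneg_dot (G *ᵥ h)]

/-- Proposition 1: sufficient conditions for regularized equivalence. -/
theorem regularized_equivalence
    {m p Tini N s r mg mgbar : ℕ}
    (hm : 0 < m) (hp : 0 < p) (hTini : 0 < Tini) (hN : 0 < N) (hs : 0 < s)
    (H : Matrix (Fin (m * Tini + p * Tini + m * N + p * N)) (Fin s) ℝ)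
    -- compact SVD of H
    (W : Matrix (Fin (m * Tini + p * Tini + m * N + p * N)) (Fin r) ℝ)
    (Sg : Matrix (Fin r) (Fin r) ℝ) (V : Matrix (Fin s) (Fin r) ℝ)
    (hW : Wᵀ * W = 1) (hV : Vᵀ * V = 1) (hSg : IsUnit Sg)
    (hSVD : H = W * Sg * Vᵀ)
    (Hbar : Matrix (Fin (m * Tini + p * Tini + m * N + p * N)) (Fin r) ℝ)
    (hHbar : Hbar = W * Sg)
    -- the regularizer matrices and the two assumed properties
    (G : Matrix (Fin mg) (Fin s) ℝ) (Gbar : Matrix (Fin mgbar) (Fin r) ℝ)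
    (hrow : rowSpace (H * Gᵀ * G) ≤ rowSpace H)
    (hGbar : Vᵀ * Gᵀ * G * V = Gbarᵀ * Gbar)
    (uini : Fin (m * Tini) → ℝ) (yini : Fin (p * Tini) → ℝ)
    (R : Matrix (Fin (m * N)) (Fin (m * N)) ℝ) (Q : Matrix (Fin (p * N)) (Fin (p * N)) ℝ)
    (hR : R.PosDef) (hQ : Q.PosDef)
    (Uset : Set (Fin (m * N) → ℝ)) (Yset : Set (Fin (p * N) → ℝ))
    (hU : Convex ℝ Uset) (hY : Convex ℝ Yset)
    (lamy lam2 : ℝ) (hlamy : 0 < lamy) (hlam2 : 0 < lam2)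
    (ustar : Fin (m * N) → ℝ) (ystar : Fin (p * N) → ℝ) (σstar : Fin (p * Tini) → ℝ) :
    -- equivalence of the two regularized problems
    ((∃ g : Fin s → ℝ,
        (H.mulVec g = vvec uini yini σstar ustar ystar ∧ ustar ∈ Uset ∧ ystar ∈ Yset) ∧
        ∀ g' : Fin s → ℝ, ∀ u' : Fin (m * N) → ℝ, ∀ y' : Fin (p * N) → ℝ,
          ∀ σ' : Fin (p * Tini) → ℝ,
          (H.mulVec g' = vvec uini yini σ' u' y' ∧ u' ∈ Uset ∧ y' ∈ Yset) →
          cost R Q lamy ustar ystar σstar + lam2 * ((G.mulVec g) ⬝ᵥ (G.mulVec g)) ≤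
            cost R Q lamy u' y' σ' + lam2 * ((G.mulVec g') ⬝ᵥ (G.mulVec g'))) ↔
      (∃ gbar : Fin r → ℝ,
        (Hbar.mulVec gbar = vvec uini yini σstar ustar ystar ∧ ustar ∈ Uset ∧ ystar ∈ Yset) ∧
        ∀ gbar' : Fin r → ℝ, ∀ u' : Fin (m * N) → ℝ, ∀ y' : Fin (p * N) → ℝ,
          ∀ σ' : Fin (p * Tini) → ℝ,
          (Hbar.mulVec gbar' = vvec uini yini σ' u' y' ∧ u' ∈ Uset ∧ y' ∈ Yset) →
          cost R Q lamy ustar ystar σstar + lam2 * ((Gbar.mulVec gbar) ⬝ᵥ (Gbar.mulVec gbar)) ≤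
            cost R Q lamy u' y' σ' + lam2 * ((Gbar.mulVec gbar') ⬝ᵥ (Gbar.mulVec gbar')))) ∧
    -- moreover, the optimal (u, y, σ) is unique whenever it exists
    (∀ g₁ u₁ y₁ σ₁ g₂ u₂ y₂ σ₂,
      ((H.mulVec g₁ = vvec uini yini σ₁ u₁ y₁ ∧ u₁ ∈ Uset ∧ y₁ ∈ Yset) ∧
        ∀ g' u' y' σ', (H.mulVec g' = vvec uini yini σ' u' y' ∧ u' ∈ Uset ∧ y' ∈ Yset) →
          cost R Q lamy u₁ y₁ σ₁ + lam2 * ((G.mulVec g₁) ⬝ᵥ (G.mulVec g₁)) ≤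
            cost R Q lamy u' y' σ' + lam2 * ((G.mulVec g') ⬝ᵥ (G.mulVec g'))) →
      ((H.mulVec g₂ = vvec uini yini σ₂ u₂ y₂ ∧ u₂ ∈ Uset ∧ y₂ ∈ Yset) ∧
        ∀ g' u' y' σ', (H.mulVec g' = vvec uini yini σ' u' y' ∧ u' ∈ Uset ∧ y' ∈ Yset) →
          cost R Q lamy u₂ y₂ σ₂ + lam2 * ((G.mulVec g₂) ⬝ᵥ (G.mulVec g₂)) ≤
            cost R Q lamy u' y' σ' + lam2 * ((G.mulVec g') ⬝ᵥ (G.mulVec g'))) →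
      u₁ = u₂ ∧ y₁ = y₂ ∧ σ₁ = σ₂) := by
  have hH : ∀ g, H *ᵥ g = Hbar *ᵥ (Vᵀ *ᵥ g) := by
    intro g; rw [hSVD, hHbar, mulVec_mulVec]
  have hHV : ∀ x, H *ᵥ (V *ᵥ x) = Hbar *ᵥ x := by
    intro x; rw [hH, mulVec_mulVec x, hV, one_mulVec]
  have hle := reg_reduced_le hW hV hSg hSVD hrow hGbar
  have hlift := reg_lift hGbar
  refine ⟨⟨?_, ?_⟩, ?_⟩
  · rintro ⟨g, ⟨hg, hu, hy⟩, hmin⟩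
    refine ⟨Vᵀ *ᵥ g, ⟨by rw [← hH, hg], hu, hy⟩, ?_⟩
    rintro x' u' y' σ' ⟨hx', hu', hy'⟩
    have h1 := hmin (V *ᵥ x') u' y' σ' ⟨by rw [hHV, hx'], hu', hy'⟩
    rw [hlift x'] at h1
    linarith [mul_le_mul_of_nonneg_left (hle g) hlam2.le]
  · rintro ⟨x, ⟨hx, hu, hy⟩, hmin⟩
    refine ⟨V *ᵥ x, ⟨by rw [hHV, hx], hu, hy⟩, ?_⟩
    rintro g' u' y' σ' ⟨hg', hu', hy'⟩
    have h1 := hmin (Vᵀ *ᵥ g') u' y' σ' ⟨by rw [← hH, hg'], hu', hy'⟩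
    rw [hlift x]
    linarith [mul_le_mul_of_nonneg_left (hle g') hlam2.le]
  · rintro g₁ u₁ y₁ σ₁ g₂ u₂ y₂ σ₂ ⟨⟨hg₁, hu₁, hy₁⟩, hmin₁⟩ ⟨⟨hg₂, hu₂, hy₂⟩, hmin₂⟩
    have hmid : H *ᵥ ((1 / 2 : ℝ) • g₁ + (1 / 2 : ℝ) • g₂) =
        vvec uini yini ((1 / 2 : ℝ) • σ₁ + (1 / 2 : ℝ) • σ₂)
          ((1 / 2 : ℝ) • u₁ + (1 / 2 : ℝ) • u₂) ((1 / 2 : ℝ) • y₁ + (1 / 2 : ℝ) • y₂) := by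
      rw [vvec_midpoint, mulVec_add, mulVec_smul, mulVec_smul, hg₁, hg₂]
    have hmU := hU hu₁ hu₂ (by norm_num : (0 : ℝ) ≤ 1 / 2) (by norm_num : (0 : ℝ) ≤ 1 / 2)
      (by norm_num)
    have hmY := hY hy₁ hy₂ (by norm_num : (0 : ℝ) ≤ 1 / 2) (by norm_num : (0 : ℝ) ≤ 1 / 2)
      (by norm_num)
    have h1 := hmin₁ _ _ _ _ ⟨hmid, hmU, hmY⟩
    have h2 := hmin₂ _ _ _ _ ⟨hmid, hmU, hmY⟩
    rw [mulVec_add, mulVec_smul, mulVec_smul, cost_midpoint, sq_midpoint] at h1 h2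
    have h3 := mul_nonneg hlam2.le (sq_nonneg_dot (G *ᵥ g₁ - G *ᵥ g₂))
    have h4 : cost R Q lamy (u₁ - u₂) (y₁ - y₂) (σ₁ - σ₂) ≤ 0 := by
      nlinarith only [h1, h2, h3]
    obtain ⟨e1, e2, e3⟩ := eq_zero_of_cost_nonpos hR hQ hlamy h4
    exact ⟨sub_eq_zero.1 e1, sub_eq_zero.1 e2, sub_eq_zero.1 e3⟩
end
end

section
/- Feasibility transfer from Data-Driven-SPC to the constrained DeePC problem: Let P₁ be a Moore–Penrose pseudoinverse of H₁, and set Π₁ := P₁H₁ and M := Y_F Π₁. If g ∈ ℝ^s, u ∈ ℝ^{mN}, y ∈ ℝ^{pN}, σ ∈ ℝ^{pT_ini} satisfy H₁ g = w(u,σ) and M g = y, then the vector g̃ := P₁ w(u,σ) satisfies H g̃ = v(u,y,σ) and (I_s − Π₁) g̃ = 0. -/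
/-!
Since `H₁ g = w`, the vector `g̃ = P₁ w` equals `Π₁ g`, the projection of `g` by `Π₁ = P₁ H₁`.
The Penrose identity `H₁ P₁ H₁ = H₁` gives `H₁ g̃ = H₁ g = w`, while `Y_F g̃ = Y_F Π₁ g = M g = y`;
stacking the two yields `H g̃ = v`. Finally `Π₁ g̃ = P₁ H₁ P₁ w = P₁ w = g̃` by `P₁ H₁ P₁ = P₁`.
-/

open Matrix

noncomputable section

/-- Vertical stacking `col(A, B)` of two matrices with the same column index. -/
def vstack {a b c : ℕ} (A : Matrix (Fin a) (Fin c) ℝ) (B : Matrix (Fin b) (Fin c) ℝ) :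
    Matrix (Fin (a + b)) (Fin c) ℝ :=
  Matrix.of fun i j => Fin.append (fun i' => A i' j) (fun i' => B i' j) i

/-- `P` is a Moore–Penrose pseudoinverse of `A`. -/
def IsMPInv {k l : ℕ} (A : Matrix (Fin k) (Fin l) ℝ) (P : Matrix (Fin l) (Fin k) ℝ) : Prop :=
  A * P * A = A ∧ P * A * P = P ∧ (A * P)ᵀ = A * P ∧ (P * A)ᵀ = P * A

theorem vstack_mulVec {a b c : ℕ} (A : Matrix (Fin a) (Fin c) ℝ) (B : Matrix (Fin b) (Fin c) ℝ)
    (x : Fin c → ℝ) : (vstack A B).mulVec x = Fin.append (A.mulVec x) (B.mulVec x) := by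
  ext i
  refine Fin.addCases (fun i => ?_) (fun i => ?_) i <;>
    simp [vstack, Matrix.mulVec, dotProduct]

/-- Feasibility transfer from Data-Driven-SPC to the constrained DeePC problem. -/
theorem feasibility_transfer_SPC_to_deePC
    {m p Tini N s : ℕ} (hm : 0 < m) (hp : 0 < p) (hTini : 0 < Tini) (hN : 0 < N) (hs : 0 < s)
    (UP : Matrix (Fin (m * Tini)) (Fin s) ℝ) (YP : Matrix (Fin (p * Tini)) (Fin s) ℝ)
    (UF : Matrix (Fin (m * N)) (Fin s) ℝ) (YF : Matrix (Fin (p * N)) (Fin s) ℝ)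
    (H1 : Matrix (Fin (m * Tini + p * Tini + m * N)) (Fin s) ℝ)
    (hH1 : H1 = vstack (vstack UP YP) UF)
    (H : Matrix (Fin (m * Tini + p * Tini + m * N + p * N)) (Fin s) ℝ)
    (hH : H = vstack H1 YF)
    (P1 : Matrix (Fin s) (Fin (m * Tini + p * Tini + m * N)) ℝ) (hP1 : IsMPInv H1 P1)
    (M : Matrix (Fin (p * N)) (Fin s) ℝ) (hM : M = YF * (P1 * H1))
    (uini : Fin (m * Tini) → ℝ) (yini : Fin (p * Tini) → ℝ)
    (g : Fin s → ℝ) (u : Fin (m * N) → ℝ) (y : Fin (p * N) → ℝ) (σ : Fin (p * Tini) → ℝ)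
    (hfeas1 : H1.mulVec g = wvec uini yini σ u) (hfeas2 : M.mulVec g = y)
    (gtilde : Fin s → ℝ) (hgtilde : gtilde = P1.mulVec (wvec uini yini σ u)) :
    H.mulVec gtilde = vvec uini yini σ u y ∧ (1 - P1 * H1).mulVec gtilde = 0 := by
  obtain ⟨hAPA, hPAP, -, -⟩ := hP1
  have hH1g : H1.mulVec gtilde = wvec uini yini σ u := by
    rw [hgtilde, ← hfeas1, mulVec_mulVec, mulVec_mulVec, hAPA]
  have hYFg : YF.mulVec gtilde = y := by
    rw [hgtilde, ← hfeas1, mulVec_mulVec, mulVec_mulVec, Matrix.mul_assoc, ← hM, hfeas2]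
  refine ⟨?_, ?_⟩
  · rw [hH, vstack_mulVec, hH1g, hYFg, vvec]
  · rw [sub_mulVec, one_mulVec, hgtilde, mulVec_mulVec, hPAP, sub_self]
end
end
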